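/- Let X be a principal (Alexandrov-discrete) topological space, i.e., one in which arbitrary intersections of open sets are open. Then X is pre-Hausdorff if and only if every open set U of X is regular open, i.e., U equals the interior of its closure (equivalently, the double-negation operator on the frame of opens is the identity). -/

import Mathlib

/-- `x` and `y` admit a T₀ separation: some open set contains one of them but not the other. -/
def T0Sep {X : Type*} [TopologicalSpace X] (x y : X) : Prop :=
  ∃ U : Set X, IsOpen U ∧ ((x ∈ U ∧ y ∉ U) ∨ (y ∈ U ∧ x ∉ U))

/-- `x` and `y` admit a T₂ separation: disjoint open sets around them. -/
def T2Sep {X : Type*} [TopologicalSpace X] (x y : X) : Prop :=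
  ∃ U V : Set X, IsOpen U ∧ IsOpen V ∧ x ∈ U ∧ y ∈ V ∧ U ∩ V = ∅

/-- A space is pre-Hausdorff (T₀,₂) if every T₀-separated pair is T₂-separated. -/
def PreHausdorff (X : Type*) [TopologicalSpace X] : Prop :=
  ∀ x y : X, T0Sep x y → T2Sep x y

/-- A space is principal (Alexandrov-discrete) if arbitrary intersections of open sets
are open. -/
def IsPrincipal (X : Type*) [TopologicalSpace X] : Prop :=
  ∀ S : Set (Set X), (∀ U ∈ S, IsOpen U) → IsOpen (⋂₀ S)

/-!
Both conditions say that every open set is closed.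

If `U` is open, the complement of its frontier is open and dense. If that complement is regular
open, it is the whole space, so `U` is closed.

In an Alexandrov-discrete space, the open sets are those stable under generalization. In an R₀ space
specialization is symmetric, so the complement of such a set is again stable under generalization.
Conversely, if `U` is clopen, then `U` and `Uᶜ` separate any point of `U` from any point outside it.
-/

section

open Set Topology

variable {X : Type*} [TopologicalSpace X]

theorem t0Sep_iff_not_inseparable {x y : X} : T0Sep x y ↔ ¬Inseparable x y :=
  not_inseparable_iff_exists_open.symm

theorem t2Sep_iff_disjoint_nhds {x y : X} : T2Sep x y ↔ Disjoint (𝓝 x) (𝓝 y) := by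
  simp only [T2Sep, (nhds_basis_opens x).disjoint_iff (nhds_basis_opens y),
    disjoint_iff_inter_eq_empty]
  grind

theorem preHausdorff_iff_r1Space : PreHausdorff X ↔ R1Space X := by
  simp only [PreHausdorff, t0Sep_iff_not_inseparable, t2Sep_iff_disjoint_nhds,
    r1Space_iff_inseparable_or_disjoint_nhds, or_iff_not_imp_left]

theorem isPrincipal_iff_alexandrovDiscrete : IsPrincipal X ↔ AlexandrovDiscrete X :=
  (alexandrovDiscrete_iff X).symm

theorem isClosed_of_isOpen_of_alexandrovDiscrete [AlexandrovDiscrete X] [R0Space X] {U : Set X}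
    (hU : IsOpen U) : IsClosed U := by
  rw [← isOpen_compl_iff, isOpen_iff_forall_specializes]
  exact fun x y hxy hy hx ↦ hy (hxy.symm.mem_open hU hx)

theorem r1Space_of_forall_isOpen_isClosed (h : ∀ U : Set X, IsOpen U → IsClosed U) :
    R1Space X where
  specializes_or_disjoint_nhds x y := by
    refine or_iff_not_imp_left.2 fun hxy ↦ ?_
    obtain ⟨U, hU, hyU, hxU⟩ := not_specializes_iff_exists_open.1 hxy
    exact Filter.disjoint_of_disjoint_of_mem disjoint_compl_left
      ((h U hU).isOpen_compl.mem_nhds hxU) (hU.mem_nhds hyU)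

theorem r1Space_iff_forall_isOpen_isClosed [AlexandrovDiscrete X] :
    R1Space X ↔ ∀ U : Set X, IsOpen U → IsClosed U :=
  ⟨fun _ _ hU ↦ isClosed_of_isOpen_of_alexandrovDiscrete hU, r1Space_of_forall_isOpen_isClosed⟩

theorem dense_compl_frontier_of_isOpen {U : Set X} (hU : IsOpen U) : Dense (frontier U)ᶜ := by
  rw [← interior_eq_empty_iff_dense_compl, ← frontier_compl]
  exact interior_frontier hU.isClosed_compl

theorem forall_isOpen_isClosed_iff_eq_interior_closure :
    (∀ U : Set X, IsOpen U → IsClosed U) ↔ ∀ U : Set X, IsOpen U → U = interior (closure U) := by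
  refine ⟨fun h U hU ↦ by rw [(h U hU).closure_eq, hU.interior_eq], fun h U hU ↦ ?_⟩
  have compl_frontier_eq_univ : (frontier U)ᶜ = univ := by
    rw [h _ isClosed_frontier.isOpen_compl, (dense_compl_frontier_of_isOpen hU).closure_eq,
      interior_univ]
  exact (isClopen_iff_frontier_eq_empty.2 (compl_univ_iff.1 compl_frontier_eq_univ)).isClosed

end

/-- A principal space is pre-Hausdorff iff every open set is regular open, i.e.
equals the interior of its closure. -/
theorem principal_preHausdorff_iff_regularOpen (X : Type*) [TopologicalSpace X]
    (hX : IsPrincipal X) :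
    PreHausdorff X ↔ ∀ U : Set X, IsOpen U → U = interior (closure U) := by
  have : AlexandrovDiscrete X := isPrincipal_iff_alexandrovDiscrete.1 hX
  rw [preHausdorff_iff_r1Space, r1Space_iff_forall_isOpen_isClosed,
    forall_isOpen_isClosed_iff_eq_interior_closure]
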